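/- Let G be a finite simple graph with 2n+1 vertices and edge weights in a commutative ring, let 2 ≤ k ≤ n, and let a_1, b_1, a_2, b_2, …, a_k, b_k be distinct vertices such that G is noncrossing with respect to the cyclic sequence (a_1, b_1, a_2, b_2, …, a_k, b_k). Set A = {a_1,…,a_k} and B = {b_1,…,b_k}. Then for every partition of A into two disjoint subsets A_1, A_2: Σ_{W⊆B, |W| odd} M(G−W)·M(G−A−(B∖W)) = Σ_{Y⊆B, |Y| ≢ |A_1| (mod 2)} M(G−A_1−Y)·M(G−A_2−(B∖Y)). -/

import Mathlib

/-- A perfect matching of the induced subgraph of `G` on the vertex set `s`,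
represented as a set `m` of edges of `G`: every edge of `m` is an edge of `G`
with both endpoints in `s`, and every vertex of `s` lies in exactly one edge of `m`. -/
def IsPMOn {α : Type*} (G : SimpleGraph α) (s : Finset α) (m : Finset (Sym2 α)) : Prop :=
  (∀ e ∈ m, e ∈ G.edgeSet ∧ ∀ v ∈ e, v ∈ s) ∧ ∀ v ∈ s, ∃! e, e ∈ m ∧ v ∈ e

/-- The number of perfect matchings of the induced subgraph of `G` on `s`. -/
noncomputable def pmCount {α : Type*} (G : SimpleGraph α) (s : Finset α) : ℕ :=
  Nat.card {m : Finset (Sym2 α) // IsPMOn G s m}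

open Classical in
/-- The sum, over all perfect matchings of the induced subgraph of `G` on `s`,
of the product of the weights of the edges of the matching. -/
noncomputable def pmSum {α R : Type*} [Fintype α] [DecidableEq α] [CommRing R]
    (G : SimpleGraph α) (w : Sym2 α → R) (s : Finset α) : R :=
  ∑ m ∈ Finset.univ.filter (fun m : Finset (Sym2 α) => IsPMOn G s m), ∏ e ∈ m, w e

/-- There are two vertex-disjoint paths in `G`, one joining `x₁` to `y₁` and one joining
`x₂` to `y₂`, whose internal vertices avoid `S`. -/
def DisjointPaths {α : Type*} (G : SimpleGraph α) (S : Set α) (x₁ y₁ x₂ y₂ : α) : Prop :=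
  ∃ (p : G.Walk x₁ y₁) (q : G.Walk x₂ y₂), p.IsPath ∧ q.IsPath ∧
    (∀ u ∈ p.support, u ∉ q.support) ∧
    (∀ u ∈ p.support, u ≠ x₁ → u ≠ y₁ → u ∉ S) ∧
    (∀ u ∈ q.support, u ≠ x₂ → u ≠ y₂ → u ∉ S)

/-- `G` is noncrossing with respect to the cyclic sequence given by the list `L`:
there are no indices `i < j < k < l` such that `G` contains two vertex-disjoint paths,
one joining `L[i]` to `L[k]` and one joining `L[j]` to `L[l]`, whose internal vertices
avoid the vertices of `L`. -/
def NoncrossingList {α : Type*} (G : SimpleGraph α) (L : List α) : Prop :=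
  ∀ i j k l : Fin L.length, i < j → j < k → k < l →
    ¬ DisjointPaths G {x | x ∈ L} (L.get i) (L.get k) (L.get j) (L.get l)

/-- `U, W` form a bipartition of the vertices of `G`. -/
def IsBipartition {α : Type*} [Fintype α] [DecidableEq α]
    (G : SimpleGraph α) (U W : Finset α) : Prop :=
  Disjoint U W ∧ U ∪ W = Finset.univ ∧
    ∀ ⦃x y⦄, G.Adj x y → ((x ∈ U ∧ y ∈ W) ∨ (x ∈ W ∧ y ∈ U))

/-- `P` is an `MH`-alternating path, where `MH` is the unique perfect matching of the
induced subgraph of `G` on the vertex set `sH`: `P` is a (nontrivial) path, among any two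
consecutive edges of `P` exactly one lies in `MH`, and for each endpoint the incident edge
of `P` lies in `MH` iff the endpoint belongs to `sH`. -/
def IsAltPath {α : Type*} (G : SimpleGraph α) (sH : Finset α) (MH : Finset (Sym2 α))
    {x y : α} (P : G.Walk x y) : Prop :=
  P.IsPath ∧ P.edges ≠ [] ∧
  P.edges.Chain' (fun e f => e ∈ MH ↔ f ∉ MH) ∧
  (∀ e ∈ P.edges.head?, (e ∈ MH ↔ x ∈ sH)) ∧
  (∀ e ∈ P.edges.getLast?, (e ∈ MH ↔ y ∈ sH))

/-- A family of pairwise vertex-disjoint `MH`-alternating paths in `G` whose set of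
path-endpoints is exactly `A`, each vertex of `A` being an endpoint of exactly one
path of the family. -/
def IsAltPathNest {α : Type*} (G : SimpleGraph α) (sH : Finset α) (MH : Finset (Sym2 α))
    (A : Finset α) (F : Finset (Σ x : α, Σ y : α, G.Walk x y)) : Prop :=
  (∀ p ∈ F, IsAltPath G sH MH p.2.2) ∧
  (∀ p ∈ F, ∀ q ∈ F, p ≠ q → ∀ u ∈ p.2.2.support, u ∉ q.2.2.support) ∧
  (∀ p ∈ F, p.1 ∈ A ∧ p.2.1 ∈ A) ∧
  (∀ v ∈ A, ∃! p, p ∈ F ∧ (v = p.1 ∨ v = p.2.1))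

/-- A 1-factor on `{1, …, n}`: a partition of `Fin n` into pairs, each pair recorded
as an ordered pair `(i, j)` with `i < j`. -/
def IsOneFactor (n : ℕ) (F : Finset (Fin n × Fin n)) : Prop :=
  (∀ p ∈ F, p.1 < p.2) ∧ ∀ v : Fin n, ∃! p, p ∈ F ∧ (v = p.1 ∨ v = p.2)

/-- The crossing number of a 1-factor: the number of pairs of pairs
`(i,j), (k,l)` in `F` with `i < k < j < l`. -/
def crossingNumber (n : ℕ) (F : Finset (Fin n × Fin n)) : ℕ :=
  ((F ×ˢ F).filter (fun q => q.1.1 < q.2.1 ∧ q.2.1 < q.1.2 ∧ q.1.2 < q.2.2)).card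

/-!
Superpose a matching missing `X ∪ Y` and one missing `(A \ X) ∪ (B \ Y)`, where `X ⊆ A` and
`Y ⊆ B`. Every vertex of `A ∪ B` is covered by exactly one of the two, so a component of the
superposition meeting `A ∪ B` is a path whose ends are its only two vertices in `A ∪ B`. As `G` is
noncrossing, these paths pair up the vertices strictly between the two ends of any one of them, so
the ends sit at positions of opposite parity in the cyclic sequence: one is in `A`, the other in
`B`. Swapping the two matchings along the paths starting in `D ⊆ A` therefore replaces `X` by its
symmetric difference with `D` and keeps the total weight. Summed over all `Y ⊆ B`, the products for
`X = ∅` and for `X = A₁` agree; the parity conditions on the sums only discard induced subgraphs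
with an odd number of vertices, which have no perfect matching.
-/

section Condensation

open Finset

section Exchange

variable {β : Type*} [DecidableEq β] {E s t : Finset β}

/-- The set obtained from `s` by replacing its part inside `E` with the part of `t` inside `E`.
It is used both for vertex sets and for edge sets of matchings. -/
def exchange (E s t : Finset β) : Finset β := s \ E ∪ t ∩ E

lemma mem_exchange {x : β} : x ∈ exchange E s t ↔ x ∈ s ∧ x ∉ E ∨ x ∈ t ∧ x ∈ E := by
  simp only [exchange, mem_union, mem_sdiff, mem_inter]

lemma exchange_exchange : exchange E (exchange E s t) (exchange E t s) = s := by
  grind [mem_exchange]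

lemma exchange_union_exchange : exchange E s t ∪ exchange E t s = s ∪ t := by
  grind [mem_exchange]

lemma compl_exchange [Fintype β] : (exchange E s t)ᶜ = exchange E sᶜ tᶜ := by
  grind [mem_exchange, mem_compl]

lemma exchange_subset {u : Finset β} (hs : s ⊆ u) (ht : t ⊆ u) : exchange E s t ⊆ u := by
  grind [mem_exchange]

lemma sdiff_exchange_sdiff (hts : t ⊆ s) : s \ exchange E t (s \ t) = exchange E (s \ t) t := by
  grind [mem_exchange]

lemma prod_exchange_mul_prod_exchange {M : Type*} [CommMonoid M] (f : β → M) :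
    (∏ x ∈ exchange E s t, f x) * ∏ x ∈ exchange E t s, f x =
      (∏ x ∈ s, f x) * ∏ x ∈ t, f x := by
  have prod_exchange (s t : Finset β) :
      ∏ x ∈ exchange E s t, f x = (∏ x ∈ s \ E, f x) * ∏ x ∈ t ∩ E, f x :=
    prod_union (sdiff_disjoint.mono_right inter_subset_right)
  rw [prod_exchange, prod_exchange, ← prod_inter_mul_prod_sdiff s E,
    ← prod_inter_mul_prod_sdiff t E]
  ac_rfl

end Exchange

section PerfectMatching

variable {α : Type*} {G : SimpleGraph α} {C s s₁ s₂ : Finset α} {m m₁ m₂ : Finset (Sym2 α)}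

lemma IsPMOn.card_eq_two_mul_card (h : IsPMOn G s m) : #s = 2 * #m := by
  classical
  have edges_at (v : α) (hv : v ∈ s) : #(m.bipartiteAbove (· ∈ ·) v) = 1 := by
    obtain ⟨e, he, huniq⟩ := h.2 v hv
    exact card_eq_one.2 ⟨e, by ext f; rw [mem_bipartiteAbove, mem_singleton]; grind⟩
  have ends_of (e : Sym2 α) (he : e ∈ m) : #(s.bipartiteBelow (· ∈ ·) e) = 2 := by
    rw [← Sym2.card_toFinset_of_not_isDiag e (G.not_isDiag_of_mem_edgeSet (h.1 e he).1)]
    congr 1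
    ext v
    rw [mem_bipartiteBelow, Sym2.mem_toFinset, and_iff_right_iff_imp]
    exact (h.1 e he).2 v
  have := card_mul_eq_card_mul (· ∈ ·) edges_at ends_of
  lia

/-- `C` is a union of vertex sets of components of the graph with edge set `m`: an edge of `m`
that meets `C` lies inside `C`. -/
def EdgeSaturated (C : Finset α) (m : Finset (Sym2 α)) : Prop :=
  ∀ e ∈ m, ∀ v ∈ e, v ∈ C → e ∈ C.sym2

variable [DecidableEq α]

lemma IsPMOn.exchange (h₁ : IsPMOn G s₁ m₁) (h₂ : IsPMOn G s₂ m₂)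
    (hC₁ : EdgeSaturated C m₁) (hC₂ : EdgeSaturated C m₂) :
    IsPMOn G (exchange C s₁ s₂) (exchange C.sym2 m₁ m₂) := by
  constructor
  · intro e he
    rcases mem_exchange.1 he with ⟨he, heC⟩ | ⟨he, heC⟩
    · exact ⟨(h₁.1 e he).1, fun v hv ↦
        mem_exchange.2 (.inl ⟨(h₁.1 e he).2 v hv, fun hvC ↦ heC (hC₁ e he v hv hvC)⟩)⟩
    · exact ⟨(h₂.1 e he).1, fun v hv ↦
        mem_exchange.2 (.inr ⟨(h₂.1 e he).2 v hv, mem_sym2_iff.1 heC v hv⟩)⟩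
  · intro v hv
    have mem_edges {e : Sym2 α} (hve : v ∈ e) :
        e ∈ _root_.exchange C.sym2 m₁ m₂ ↔ if v ∈ C then e ∈ m₂ else e ∈ m₁ := by
      have := hC₁ e
      have := hC₂ e
      have := @mem_sym2_iff _ C e
      grind [mem_exchange]
    have congr_edges (e : Sym2 α) : e ∈ _root_.exchange C.sym2 m₁ m₂ ∧ v ∈ e ↔
        (if v ∈ C then e ∈ m₂ else e ∈ m₁) ∧ v ∈ e := and_congr_left mem_edges
    simp only [congr_edges]
    rcases mem_exchange.1 hv with ⟨hv, hvC⟩ | ⟨hv, hvC⟩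
    · simpa only [if_neg hvC] using h₁.2 v hv
    · simpa only [if_pos hvC] using h₂.2 v hv

lemma IsPMOn.inter (h : IsPMOn G s m) (hC : EdgeSaturated C m) :
    IsPMOn G (s ∩ C) (m ∩ C.sym2) := by
  have empty_matching : IsPMOn G ∅ ∅ := by simp [IsPMOn]
  simpa only [_root_.exchange, empty_sdiff, empty_union]
    using empty_matching.exchange h (by simp [EdgeSaturated]) hC

lemma pmSum_eq_zero_of_odd_card {R : Type*} [Fintype α] [CommRing R] (w : Sym2 α → R)
    (hs : Odd #s) : pmSum G w s = 0 := by
  classical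
  rw [pmSum]
  refine sum_eq_zero fun m hm ↦ ?_
  have := (mem_filter.1 hm).2.card_eq_two_mul_card
  grind

lemma sum_filter_pmSum_univ_sdiff_mul {ι R : Type*} [Fintype α] [CommRing R] (w : Sym2 α → R)
    (hα : Odd (Fintype.card α)) {I : Finset ι} {p : ι → Prop} [DecidablePred p]
    {s : ι → Finset α} {f : ι → R} (hp : ∀ i ∈ I, ¬ p i → Even #(s i)) :
    ∑ i ∈ I with p i, pmSum G w (univ \ s i) * f i = ∑ i ∈ I, pmSum G w (univ \ s i) * f i := by
  refine sum_filter_of_ne fun i hi hne ↦ ?_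
  by_contra hpi
  have odd_card : Odd #(univ \ s i) := by
    rw [← compl_eq_univ_sdiff, card_compl, Nat.odd_sub (card_le_univ _)]
    exact iff_of_true hα (hp i hi hpi)
  rw [pmSum_eq_zero_of_odd_card w odd_card, zero_mul] at hne
  exact hne rfl

end PerfectMatching

section Superposition

variable {α : Type*}

/-- The graph formed by the edges of two matchings laid on top of each other. -/
def superposition (m₁ m₂ : Finset (Sym2 α)) : SimpleGraph α :=
  SimpleGraph.fromEdgeSet {e | e ∈ m₁ ∨ e ∈ m₂}

variable {G : SimpleGraph α} {s₁ s₂ : Finset α} {m₁ m₂ : Finset (Sym2 α)}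

lemma superposition_le (h₁ : IsPMOn G s₁ m₁) (h₂ : IsPMOn G s₂ m₂) :
    superposition m₁ m₂ ≤ G := by
  intro x y hxy
  rcases ((SimpleGraph.fromEdgeSet_adj _).1 hxy).1 with h | h
  exacts [(h₁.1 _ h).1, (h₂.1 _ h).1]

lemma superposition_exchange [DecidableEq α] (E : Finset (Sym2 α)) :
    superposition (exchange E m₁ m₂) (exchange E m₂ m₁) = superposition m₁ m₂ := by
  simp only [superposition, ← mem_union, exchange_union_exchange]

variable [Fintype α]

open Classical in
/-- The union of the vertex sets of the components of `H` that meet `D`. -/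
noncomputable def reachSet (H : SimpleGraph α) (D : Finset α) : Finset α :=
  {v | ∃ x ∈ D, H.Reachable x v}

lemma mem_reachSet {H : SimpleGraph α} {D : Finset α} {v : α} :
    v ∈ reachSet H D ↔ ∃ x ∈ D, H.Reachable x v := by
  simp only [reachSet, mem_filter_univ]

lemma mem_reachSet_singleton {H : SimpleGraph α} {x v : α} :
    v ∈ reachSet H {x} ↔ H.Reachable x v := by
  simp only [mem_reachSet, mem_singleton, exists_eq_left]

lemma edgeSaturated_reachSet {H : SimpleGraph α} (D : Finset α) {m : Finset (Sym2 α)}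
    (hm : ∀ e ∈ m, ¬ e.IsDiag → e ∈ H.edgeSet) : EdgeSaturated (reachSet H D) m := by
  intro e he u hu huD
  rw [mem_sym2_iff]
  intro v hv
  by_cases huv : u = v
  · exact huv ▸ huD
  · obtain rfl := (Sym2.mem_and_mem_iff huv).1 ⟨hu, hv⟩
    obtain ⟨x, hx, hxu⟩ := mem_reachSet.1 huD
    exact mem_reachSet.2 ⟨x, hx, hxu.trans (SimpleGraph.Adj.reachable (hm _ he huv))⟩

lemma edgeSaturated_superposition_left (D : Finset α) :
    EdgeSaturated (reachSet (superposition m₁ m₂) D) m₁ :=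
  edgeSaturated_reachSet D fun e he hdiag ↦ by
    rw [superposition, SimpleGraph.edgeSet_fromEdgeSet]
    exact ⟨.inl he, hdiag⟩

lemma edgeSaturated_superposition_right (D : Finset α) :
    EdgeSaturated (reachSet (superposition m₁ m₂) D) m₂ :=
  edgeSaturated_reachSet D fun e he hdiag ↦ by
    rw [superposition, SimpleGraph.edgeSet_fromEdgeSet]
    exact ⟨.inr he, hdiag⟩

lemma card_reachSet_singleton_le (H : SimpleGraph α) (x : α) {F : Finset (Sym2 α)}
    (hF : ∀ e ∈ H.edgeSet, e ∈ (reachSet H {x}).sym2 → e ∈ F) :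
    #(reachSet H {x}) ≤ #F + 1 := by
  set c := H.connectedComponentMk x
  have mem_supp (v : α) : v ∈ c.supp ↔ v ∈ reachSet H {x} := by
    rw [mem_reachSet_singleton, SimpleGraph.reachable_comm]
    exact SimpleGraph.ConnectedComponent.eq
  have card_supp : Nat.card c = #(reachSet H {x}) :=
    Nat.subtype_card _ fun v ↦ (mem_supp v).symm
  have card_edges : Nat.card c.toSimpleGraph.edgeSet ≤ #F := by
    have mem_F (e : c.toSimpleGraph.edgeSet) : Sym2.map Subtype.val e.1 ∈ F := by
      obtain ⟨⟨u, v⟩, huv⟩ := e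
      exact hF _ huv (mk_mem_sym2_iff.2 ⟨(mem_supp u).1 u.2, (mem_supp v).1 v.2⟩)
    rw [← Fintype.card_coe, ← Nat.card_eq_fintype_card]
    refine Nat.card_le_card_of_injective (fun e ↦ ⟨Sym2.map Subtype.val e.1, mem_F e⟩) ?_
    exact fun e f hef ↦ Subtype.ext <|
      Sym2.map.injective Subtype.val_injective (congrArg Subtype.val hef)
  have := c.connected_toSimpleGraph.card_vert_le_card_edgeSet_add_one
  lia

variable [DecidableEq α]

/- The component of `x` is a connected graph, so it has at least as many edges as vertices less
one, whereas each matching contributes half as many edges as it covers vertices. -/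
lemma card_reachSet_sdiff_add_card_reachSet_sdiff {x : α} (h₁ : IsPMOn G s₁ m₁)
    (h₂ : IsPMOn G s₂ m₂) (hx : x ∉ s₁ ∨ x ∉ s₂) :
    #(reachSet (superposition m₁ m₂) {x} \ s₁) + #(reachSet (superposition m₁ m₂) {x} \ s₂) =
      2 := by
  set C := reachSet (superposition m₁ m₂) {x}
  have card₁ := (h₁.inter (edgeSaturated_superposition_left (m₂ := m₂) {x})).card_eq_two_mul_card
  have card₂ := (h₂.inter (edgeSaturated_superposition_right (m₁ := m₁) {x})).card_eq_two_mul_card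
  have card_le : #C ≤ #(m₁ ∩ C.sym2 ∪ m₂ ∩ C.sym2) + 1 :=
    card_reachSet_singleton_le _ x fun e he heC ↦ by
      rw [superposition, SimpleGraph.edgeSet_fromEdgeSet] at he
      grind
  have card_union := card_union_le (m₁ ∩ C.sym2) (m₂ ∩ C.sym2)
  have split₁ := card_inter_add_card_sdiff C s₁
  have split₂ := card_inter_add_card_sdiff C s₂
  have pos : 0 < #(C \ s₁) + #(C \ s₂) := by
    have hxC : x ∈ C := mem_reachSet_singleton.2 .rfl
    rcases hx with hx | hx
    · exact Nat.add_pos_left (card_pos.2 ⟨x, mem_sdiff.2 ⟨hxC, hx⟩⟩) _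
    · exact Nat.add_pos_right _ (card_pos.2 ⟨x, mem_sdiff.2 ⟨hxC, hx⟩⟩)
  rw [inter_comm] at split₁ split₂
  lia

end Superposition

section SplitMatching

variable {α : Type*} [Fintype α] [DecidableEq α] {G : SimpleGraph α} {S T : Finset α}
  {m₁ m₂ : Finset (Sym2 α)}

/-- A pair of matchings such that a vertex of `S` is covered by exactly one of them, and any other
vertex by both; `T` is the set of vertices of `S` missed by the first matching. -/
structure IsSplitMatching (G : SimpleGraph α) (S T : Finset α) (m₁ m₂ : Finset (Sym2 α)) :
    Prop where
  subset : T ⊆ S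
  left : IsPMOn G Tᶜ m₁
  right : IsPMOn G (S \ T)ᶜ m₂

lemma IsSplitMatching.superposition_le (h : IsSplitMatching G S T m₁ m₂) :
    superposition m₁ m₂ ≤ G :=
  _root_.superposition_le h.left h.right

open Classical in
lemma IsSplitMatching.card_filter_reachable (h : IsSplitMatching G S T m₁ m₂) {x : α}
    (hx : x ∈ S) : #{v ∈ S | (superposition m₁ m₂).Reachable x v} = 2 := by
  set C := reachSet (superposition m₁ m₂) {x}
  have card_eq : #(C \ Tᶜ) + #(C \ (S \ T)ᶜ) = 2 :=
    card_reachSet_sdiff_add_card_reachSet_sdiff h.left h.right (by grind [mem_compl])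
  rw [← card_eq, ← card_union_of_disjoint (by grind [disjoint_left, mem_compl])]
  congr 1
  ext v
  have := @h.subset v
  have := @mem_reachSet_singleton _ _ (superposition m₁ m₂) x v
  grind [mem_compl]

lemma IsSplitMatching.exchange {C : Finset α} (h : IsSplitMatching G S T m₁ m₂)
    (hC₁ : EdgeSaturated C m₁) (hC₂ : EdgeSaturated C m₂) :
    IsSplitMatching G S (exchange C T (S \ T)) (exchange C.sym2 m₁ m₂)
      (exchange C.sym2 m₂ m₁) where
  subset := exchange_subset h.subset sdiff_subset
  left := by
    rw [compl_exchange]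
    exact h.left.exchange h.right hC₁ hC₂
  right := by
    rw [sdiff_exchange_sdiff h.subset, compl_exchange]
    exact h.right.exchange h.left hC₂ hC₁

open Classical in
/-- The split matchings `(T, m₁, m₂)` of `G` whose first matching misses exactly the vertices `X`
of `A`. -/
noncomputable def splitMatchings (G : SimpleGraph α) (S A X : Finset α) :
    Finset (Finset α × Finset (Sym2 α) × Finset (Sym2 α)) :=
  {t | t.1 ∩ A = X ∧ IsSplitMatching G S t.1 t.2.1 t.2.2}

lemma mem_splitMatchings {A X : Finset α} {t : Finset α × Finset (Sym2 α) × Finset (Sym2 α)} :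
    t ∈ splitMatchings G S A X ↔ t.1 ∩ A = X ∧ IsSplitMatching G S t.1 t.2.1 t.2.2 := by
  simp only [splitMatchings, mem_filter_univ]

/-- Swaps the two matchings on all components of their superposition that meet `D`. -/
noncomputable def switch (S D : Finset α) (t : Finset α × Finset (Sym2 α) × Finset (Sym2 α)) :
    Finset α × Finset (Sym2 α) × Finset (Sym2 α) :=
  let C := reachSet (superposition t.2.1 t.2.2) D
  (exchange C t.1 (S \ t.1), exchange C.sym2 t.2.1 t.2.2, exchange C.sym2 t.2.2 t.2.1)

lemma switch_switch (D : Finset α) {t : Finset α × Finset (Sym2 α) × Finset (Sym2 α)}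
    (ht : t.1 ⊆ S) : switch S D (switch S D t) = t := by
  simp only [switch, superposition_exchange, sdiff_exchange_sdiff ht, exchange_exchange]

lemma reachSet_inter {H : SimpleGraph α} {A D : Finset α}
    (hA : Set.InjOn H.connectedComponentMk A) (hD : D ⊆ A) : reachSet H D ∩ A = D := by
  ext v
  rw [mem_inter, mem_reachSet]
  constructor
  · rintro ⟨⟨x, hx, hxv⟩, hv⟩
    exact hA (hD hx) hv (SimpleGraph.ConnectedComponent.eq.2 hxv) ▸ hx
  · exact fun hv ↦ ⟨⟨v, hv, .rfl⟩, hD hv⟩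

lemma switch_mem_splitMatchings {A X X' : Finset α} (hAS : A ⊆ S) (hX : X ⊆ A) (hX' : X' ⊆ A)
    {t : Finset α × Finset (Sym2 α) × Finset (Sym2 α)} (ht : t ∈ splitMatchings G S A X)
    (hA : Set.InjOn (superposition t.2.1 t.2.2).connectedComponentMk A) :
    switch S (symmDiff X X') t ∈ splitMatchings G S A X' := by
  obtain ⟨htX, hsplit⟩ := mem_splitMatchings.1 ht
  refine mem_splitMatchings.2 ⟨?_, hsplit.exchange (edgeSaturated_superposition_left _)
    (edgeSaturated_superposition_right _)⟩
  have hC := reachSet_inter hA (D := symmDiff X X') (by grind [mem_symmDiff])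
  simp only [switch]
  ext v
  have := @hsplit.subset v
  have mem_C := Finset.ext_iff.1 hC v
  have mem_X := Finset.ext_iff.1 htX v
  grind [mem_exchange, mem_symmDiff]

lemma sum_splitMatchings_eq {R : Type*} [CommSemiring R] (w : Sym2 α → R) {A X X' : Finset α}
    (hAS : A ⊆ S) (hX : X ⊆ A) (hX' : X' ⊆ A)
    (hA : ∀ T m₁ m₂, IsSplitMatching G S T m₁ m₂ →
      Set.InjOn (superposition m₁ m₂).connectedComponentMk A) :
    ∑ t ∈ splitMatchings G S A X, (∏ e ∈ t.2.1, w e) * ∏ e ∈ t.2.2, w e =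
      ∑ t ∈ splitMatchings G S A X', (∏ e ∈ t.2.1, w e) * ∏ e ∈ t.2.2, w e := by
  have maps {X X' : Finset α} (hX : X ⊆ A) (hX' : X' ⊆ A) :
      ∀ t ∈ splitMatchings G S A X, switch S (symmDiff X X') t ∈ splitMatchings G S A X' :=
    fun t ht ↦ switch_mem_splitMatchings hAS hX hX' ht (hA _ _ _ (mem_splitMatchings.1 ht).2)
  have involutive {X : Finset α} (D : Finset α) :
      ∀ t ∈ splitMatchings G S A X, switch S D (switch S D t) = t :=
    fun t ht ↦ switch_switch D (mem_splitMatchings.1 ht).2.subset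
  exact sum_nbij' (switch S (symmDiff X X')) (switch S (symmDiff X X')) (maps hX hX')
    (symmDiff_comm X X' ▸ maps hX' hX) (involutive _) (involutive _)
    fun _ _ ↦ (prod_exchange_mul_prod_exchange w).symm

lemma sum_powerset_pmSum_mul_pmSum {R : Type*} [CommRing R] (w : Sym2 α → R)
    {A B X : Finset α} (hAB : Disjoint A B) (hX : X ⊆ A) :
    ∑ Y ∈ B.powerset, pmSum G w (X ∪ Y)ᶜ * pmSum G w (A \ X ∪ B \ Y)ᶜ =
      ∑ t ∈ splitMatchings G (A ∪ B) A X, (∏ e ∈ t.2.1, w e) * ∏ e ∈ t.2.2, w e := by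
  classical
  have reindex : ∑ Y ∈ B.powerset, pmSum G w (X ∪ Y)ᶜ * pmSum G w (A \ X ∪ B \ Y)ᶜ =
      ∑ T ∈ (A ∪ B).powerset with T ∩ A = X, pmSum G w Tᶜ * pmSum G w ((A ∪ B) \ T)ᶜ := by
    have hAB' := disjoint_left.1 hAB
    refine sum_nbij' (X ∪ ·) (· ∩ B) ?_ ?_ ?_ ?_ ?_
    · grind
    · grind
    · grind
    · grind
    · intro Y hY
      congr 3
      grind
  rw [reindex]
  symm
  calc
    _ = ∑ T ∈ (A ∪ B).powerset with T ∩ A = X,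
        ∑ m ∈ ({m₁ | IsPMOn G Tᶜ m₁} : Finset (Finset (Sym2 α))) ×ˢ
          ({m₂ | IsPMOn G ((A ∪ B) \ T)ᶜ m₂} : Finset (Finset (Sym2 α))),
          (∏ e ∈ m.1, w e) * ∏ e ∈ m.2, w e :=
      sum_finset_product' _ _ _ fun t ↦ by
        simp only [mem_splitMatchings, mem_filter, mem_powerset, mem_product, mem_univ, true_and]
        exact ⟨fun ⟨hX, h⟩ ↦ ⟨⟨h.subset, hX⟩, h.left, h.right⟩,
          fun ⟨⟨hT, hX⟩, h₁, h₂⟩ ↦ ⟨hX, hT, h₁, h₂⟩⟩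
    _ = _ := by simp only [pmSum, sum_mul_sum, sum_product]

end SplitMatching

section Noncrossing

/- The points strictly between `p` and `q` are matched among themselves. -/
lemma even_card_Ioo_of_noncrossing {ι γ : Type*} [LinearOrder ι] [Fintype ι]
    [LocallyFiniteOrder ι] [DecidableEq γ] (f : ι → γ) (hf : ∀ i, #{j | f j = f i} = 2)
    (hnc : ∀ i j k l, i < j → j < k → k < l → f i = f k → f j = f l → f i = f j)
    {p q : ι} (hpq : p < q) (hfpq : f p = f q) : Even #(Ioo p q) := by
  have fiber_eq : ({j | f j = f p} : Finset ι) = {p, q} :=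
    (eq_of_subset_of_card_le (by grind) (by rw [hf, card_pair hpq.ne])).symm
  have ne_of_mem_Ioo : ∀ r ∈ Ioo p q, f r ≠ f p := by
    intro r hr hrp
    have : r ∈ ({p, q} : Finset ι) := fiber_eq ▸ mem_filter_univ _ |>.2 hrp
    grind
  have fiber_subset : ∀ r ∈ Ioo p q, ∀ t, f t = f r → t ∈ Ioo p q := by
    intro r hr t htr
    have hrp := ne_of_mem_Ioo r hr
    have left := hnc t p r q
    have right := hnc p r q t
    grind
  rw [card_eq_sum_card_image f]
  refine even_sum _ fun c hc ↦ ?_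
  obtain ⟨r, hr, rfl⟩ := mem_image.1 hc
  have : ({t ∈ Ioo p q | f t = f r} : Finset ι) = ({t | f t = f r} : Finset ι) := by
    have := fiber_subset r hr
    grind
  rw [this, hf]
  exact even_two

lemma DisjointPaths.of_reachable {α : Type*} {G H : SimpleGraph α} {S : Set α}
    {x₁ y₁ x₂ y₂ : α} (hHG : H ≤ G) (h₁ : H.Reachable x₁ y₁) (h₂ : H.Reachable x₂ y₂)
    (hne : ¬ H.Reachable x₁ x₂) (hS₁ : ∀ u ∈ S, H.Reachable x₁ u → u = x₁ ∨ u = y₁)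
    (hS₂ : ∀ u ∈ S, H.Reachable x₂ u → u = x₂ ∨ u = y₂) : DisjointPaths G S x₁ y₁ x₂ y₂ := by
  classical
  obtain ⟨p, hp⟩ := h₁.exists_isPath
  obtain ⟨q, hq⟩ := h₂.exists_isPath
  refine ⟨p.mapLe hHG, q.mapLe hHG, hp.mapLe hHG, hq.mapLe hHG, ?_, ?_, ?_⟩ <;>
    simp only [SimpleGraph.Walk.support_mapLe_eq_support]
  · exact fun u hup huq ↦ hne (.trans ⟨p.takeUntil u hup⟩ (.symm ⟨q.takeUntil u huq⟩))
  · exact fun u hu hux huy huS ↦ (hS₁ u huS ⟨p.takeUntil u hu⟩).elim hux huy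
  · exact fun u hu hux huy huS ↦ (hS₂ u huS ⟨q.takeUntil u hu⟩).elim hux huy

variable {α : Type*} [Fintype α] [DecidableEq α] {G : SimpleGraph α} {L : List α}
  {T : Finset α} {m₁ m₂ : Finset (Sym2 α)}

open Classical in
lemma IsSplitMatching.card_filter_component_get (h : IsSplitMatching G L.toFinset T m₁ m₂)
    (hL : L.Nodup) (i : Fin L.length) :
    #{j | (superposition m₁ m₂).connectedComponentMk (L.get j) =
      (superposition m₁ m₂).connectedComponentMk (L.get i)} = 2 := by
  rw [← h.card_filter_reachable (List.mem_toFinset.2 (L.get_mem i)),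
    ← card_image_of_injective _ hL.injective_get]
  congr 1
  ext v
  simp only [mem_image, mem_filter, mem_univ, true_and, List.mem_toFinset,
    SimpleGraph.ConnectedComponent.eq]
  constructor
  · rintro ⟨j, hj, rfl⟩
    exact ⟨L.get_mem j, hj.symm⟩
  · rintro ⟨hv, hr⟩
    obtain ⟨j, rfl⟩ := List.get_of_mem hv
    exact ⟨j, hr.symm, rfl⟩

lemma IsSplitMatching.eq_or_eq_of_reachable {S : Finset α} (h : IsSplitMatching G S T m₁ m₂)
    {x y u : α} (hx : x ∈ S) (hy : y ∈ S) (hxy : x ≠ y)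
    (hxy_reach : (superposition m₁ m₂).Reachable x y) (hu : u ∈ S)
    (hxu : (superposition m₁ m₂).Reachable x u) : u = x ∨ u = y := by
  classical
  have pair_eq : {x, y} = ({v ∈ S | (superposition m₁ m₂).Reachable x v} : Finset α) :=
    eq_of_subset_of_card_le (by grind [SimpleGraph.Reachable.refl])
      (by rw [h.card_filter_reachable hx, card_pair hxy])
  have : u ∈ ({x, y} : Finset α) := pair_eq ▸ mem_filter.2 ⟨hu, hxu⟩
  simpa using this

lemma IsSplitMatching.reachable_of_crossing (h : IsSplitMatching G L.toFinset T m₁ m₂)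
    (hL : L.Nodup) (hnc : NoncrossingList G L) {i j k l : Fin L.length}
    (hij : i < j) (hjk : j < k) (hkl : k < l)
    (hik : (superposition m₁ m₂).Reachable (L.get i) (L.get k))
    (hjl : (superposition m₁ m₂).Reachable (L.get j) (L.get l)) :
    (superposition m₁ m₂).Reachable (L.get i) (L.get j) := by
  by_contra hne
  have mem (r : Fin L.length) : L.get r ∈ L.toFinset := List.mem_toFinset.2 (L.get_mem r)
  have get_ne {r t : Fin L.length} (hrt : r < t) : L.get r ≠ L.get t :=
    hL.injective_get.ne hrt.ne
  exact hnc i j k l hij hjk hkl <| .of_reachable h.superposition_le hik hjl hne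
    (fun u hu ↦ h.eq_or_eq_of_reachable (mem i) (mem k) (get_ne (hij.trans hjk)) hik
      (List.mem_toFinset.2 hu))
    (fun u hu ↦ h.eq_or_eq_of_reachable (mem j) (mem l) (get_ne (hjk.trans hkl)) hjl
      (List.mem_toFinset.2 hu))

lemma IsSplitMatching.odd_add_of_reachable (h : IsSplitMatching G L.toFinset T m₁ m₂)
    (hL : L.Nodup) (hnc : NoncrossingList G L) {p q : Fin L.length} (hpq : p < q)
    (hr : (superposition m₁ m₂).Reachable (L.get p) (L.get q)) : Odd (p + q : ℕ) := by
  classical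
  have even_between := even_card_Ioo_of_noncrossing
    (fun i ↦ (superposition m₁ m₂).connectedComponentMk (L.get i))
    (h.card_filter_component_get hL)
    (fun i j k l hij hjk hkl hik hjl ↦ SimpleGraph.ConnectedComponent.eq.2 <|
      h.reachable_of_crossing hL hnc hij hjk hkl (SimpleGraph.ConnectedComponent.eq.1 hik)
        (SimpleGraph.ConnectedComponent.eq.1 hjl))
    hpq (SimpleGraph.ConnectedComponent.eq.2 hr)
  rw [Fin.card_Ioo] at even_between
  grind

lemma IsSplitMatching.injOn_connectedComponentMk (h : IsSplitMatching G L.toFinset T m₁ m₂)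
    (hL : L.Nodup) (hnc : NoncrossingList G L) {A : Finset α} (hAL : A ⊆ L.toFinset)
    (hA : ∀ i j : Fin L.length, L.get i ∈ A → L.get j ∈ A → Even (i + j : ℕ)) :
    Set.InjOn (superposition m₁ m₂).connectedComponentMk A := by
  intro x hx y hy hxy
  obtain ⟨i, rfl⟩ := List.get_of_mem (List.mem_toFinset.1 (hAL hx))
  obtain ⟨j, rfl⟩ := List.get_of_mem (List.mem_toFinset.1 (hAL hy))
  have hreach := SimpleGraph.ConnectedComponent.eq.1 hxy
  rcases lt_trichotomy i j with hij | rfl | hji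
  · exact absurd (hA i j hx hy) (Nat.not_even_iff_odd.2 (h.odd_add_of_reachable hL hnc hij hreach))
  · rfl
  · exact absurd (hA j i hy hx)
      (Nat.not_even_iff_odd.2 (h.odd_add_of_reachable hL hnc hji hreach.symm))

theorem sum_pmSum_mul_pmSum_eq_of_noncrossing {R : Type*} [CommRing R] (w : Sym2 α → R)
    (hL : L.Nodup) (hnc : NoncrossingList G L) {A B : Finset α} (hAB : Disjoint A B)
    (hLAB : L.toFinset = A ∪ B)
    (hA : ∀ i j : Fin L.length, L.get i ∈ A → L.get j ∈ A → Even (i + j : ℕ))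
    {X X' : Finset α} (hX : X ⊆ A) (hX' : X' ⊆ A) :
    ∑ Y ∈ B.powerset, pmSum G w (X ∪ Y)ᶜ * pmSum G w (A \ X ∪ B \ Y)ᶜ =
      ∑ Y ∈ B.powerset, pmSum G w (X' ∪ Y)ᶜ * pmSum G w (A \ X' ∪ B \ Y)ᶜ := by
  rw [sum_powerset_pmSum_mul_pmSum w hAB hX, sum_powerset_pmSum_mul_pmSum w hAB hX']
  refine sum_splitMatchings_eq w subset_union_left hX hX' fun T m₁ m₂ h ↦ ?_
  rw [← hLAB] at h
  exact h.injOn_connectedComponentMk hL hnc (hLAB ▸ subset_union_left) hA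

end Noncrossing

section Interleave

variable {ι α : Type*} (a b : ι → α) (l : List ι)

lemma flatMap_pair_perm : (l.flatMap fun i ↦ [a i, b i]).Perm (l.map a ++ l.map b) := by
  rw [List.map_eq_flatMap, List.map_eq_flatMap]
  exact (List.flatMap_append_perm l (fun i ↦ [a i]) fun i ↦ [b i]).symm

lemma getElem?_flatMap_pair_two_mul_add_one (i : ℕ) :
    (l.flatMap fun i ↦ [a i, b i])[2 * i + 1]? = l[i]?.map b := by
  induction l generalizing i with
  | nil => simp
  | cons x l ih =>
    cases i with
    | zero => simp
    | succ i => simpa [Nat.mul_add] using ih i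

variable {a b l}

lemma disjoint_of_nodup_flatMap_pair (h : (l.flatMap fun i ↦ [a i, b i]).Nodup) :
    (l.map a).Disjoint (l.map b) :=
  List.disjoint_of_nodup_append ((flatMap_pair_perm a b l).nodup_iff.1 h)

lemma even_of_get_flatMap_pair_mem (h : (l.flatMap fun i ↦ [a i, b i]).Nodup)
    {p : Fin (l.flatMap fun i ↦ [a i, b i]).length}
    (hp : (l.flatMap fun i ↦ [a i, b i]).get p ∈ l.map a) : Even (p : ℕ) := by
  by_contra hodd
  obtain ⟨i, hi⟩ := Nat.not_even_iff_odd.1 hodd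
  refine disjoint_of_nodup_flatMap_pair h hp ?_
  have hb := getElem?_flatMap_pair_two_mul_add_one a b l i
  rw [← hi, List.getElem?_eq_getElem p.2, eq_comm, ← List.getElem?_map] at hb
  exact List.mem_of_getElem? hb

variable [DecidableEq α] {k : ℕ} {a b : Fin k → α}

lemma toFinset_flatMap_finRange_pair :
    ((List.finRange k).flatMap fun i ↦ [a i, b i]).toFinset = univ.image a ∪ univ.image b := by
  ext v
  simp [List.mem_toFinset, (flatMap_pair_perm a b _).mem_iff]

lemma disjoint_image_of_nodup_flatMap_finRange_pair
    (h : ((List.finRange k).flatMap fun i ↦ [a i, b i]).Nodup) :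
    Disjoint (univ.image a) (univ.image b) := by
  have hab := disjoint_of_nodup_flatMap_pair h
  rw [disjoint_left]
  exact fun v ha hb ↦ hab (by simpa using ha) (by simpa using hb)

end Interleave

end Condensation

theorem generalized_condensation_odd_general {α R : Type*} [Fintype α] [DecidableEq α]
    [CommRing R] (G : SimpleGraph α) (w : Sym2 α → R) {k : ℕ} {a b : Fin k → α}
    (hdist : ((List.finRange k).flatMap fun i ↦ [a i, b i]).Nodup)
    (hnc : NoncrossingList G ((List.finRange k).flatMap fun i ↦ [a i, b i]))
    {A B : Finset α} (hA : A = Finset.univ.image a) (hB : B = Finset.univ.image b)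
    {A₁ A₂ : Finset α} (hpart : A₁ ∪ A₂ = A) (hdisj : Disjoint A₁ A₂) :
    ∑ W ∈ B.powerset, pmSum G w (Finset.univ \ W) * pmSum G w (Finset.univ \ (A ∪ (B \ W))) =
      ∑ Y ∈ B.powerset,
        pmSum G w (Finset.univ \ (A₁ ∪ Y)) * pmSum G w (Finset.univ \ (A₂ ∪ (B \ Y))) := by
  obtain rfl : A₂ = A \ A₁ := by rw [← hpart, Finset.union_sdiff_cancel_left hdisj]
  have hA₁ : A₁ ⊆ A := hpart ▸ Finset.subset_union_left
  subst hA hB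
  have even_position {i : Fin ((List.finRange k).flatMap fun i ↦ [a i, b i]).length}
      (hi : ((List.finRange k).flatMap fun i ↦ [a i, b i]).get i ∈ Finset.univ.image a) :
      Even (i : ℕ) :=
    even_of_get_flatMap_pair_mem hdist (by simpa using hi)
  have sum_eq := sum_pmSum_mul_pmSum_eq_of_noncrossing w hdist hnc
    (disjoint_image_of_nodup_flatMap_finRange_pair hdist) toFinset_flatMap_finRange_pair
    (fun i j hi hj ↦ (even_position hi).add (even_position hj)) (Finset.empty_subset _) hA₁
  simpa only [Finset.empty_union, Finset.sdiff_empty, Finset.compl_eq_univ_sdiff] using sum_eq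

/-- Generalized graphical condensation, odd number of vertices (Theorem 2.6). -/
theorem generalized_condensation_odd {α R : Type*} [Fintype α] [DecidableEq α] [CommRing R]
    (G : SimpleGraph α) (w : Sym2 α → R) (n k : ℕ)
    (hcard : Fintype.card α = 2 * n + 1) (hk2 : 2 ≤ k) (hkn : k ≤ n)
    (a b : Fin k → α)
    (hdist : ((List.finRange k).flatMap (fun i => [a i, b i])).Nodup)
    (hnc : NoncrossingList G ((List.finRange k).flatMap (fun i => [a i, b i])))
    (A B : Finset α) (hA : A = Finset.univ.image a) (hB : B = Finset.univ.image b)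
    (A₁ A₂ : Finset α) (hpart : A₁ ∪ A₂ = A) (hdisj : Disjoint A₁ A₂) :
    ∑ W ∈ B.powerset.filter (fun W => Odd W.card),
        pmSum G w (Finset.univ \ W) * pmSum G w (Finset.univ \ (A ∪ (B \ W))) =
    ∑ Y ∈ B.powerset.filter (fun Y => Y.card % 2 ≠ A₁.card % 2),
        pmSum G w (Finset.univ \ (A₁ ∪ Y)) *
          pmSum G w (Finset.univ \ (A₂ ∪ (B \ Y))) := by
  have hA₁B : Disjoint A₁ B := by
    rw [hB]
    exact (disjoint_image_of_nodup_flatMap_finRange_pair hdist).mono_left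
      (hA ▸ hpart ▸ Finset.subset_union_left)
  have hα : Odd (Fintype.card α) := ⟨n, hcard⟩
  rw [sum_filter_pmSum_univ_sdiff_mul w hα, sum_filter_pmSum_univ_sdiff_mul w hα]
  · exact generalized_condensation_odd_general G w hdist hnc hA hB hpart hdisj
  · intro Y hY hparity
    rw [Finset.card_union_of_disjoint (hA₁B.mono_right (Finset.mem_powerset.1 hY))]
    grind
  · exact fun W _ hW ↦ Nat.not_odd_iff_even.1 hW
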